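/- Algorithm Greedy is O(b^{k-1})-competitive for the d-uniform Bounded-Delay Goodput problem with k packets per frame and maximum burst size b: letting O be the set of frames delivered by an optimal schedule and F_G the set of frames completed by Greedy, |O \ F_G| ≤ |F_G| · 2 · Σ_{ℓ=1}^{k} (1+b)^{ℓ−1}, and hence |O| ≤ C · b^{k-1} · |F_G| for some absolute constant C (for b ≥ k). -/

import Mathlib

/-! ## Model: d-uniform bounded-delay goodput ({\sc d-uBDG}) instances -/

/-- An arrival sequence for the `d`-uniform bounded-delay goodput problem:
`n` frames, each consisting of `k` unit-size packets; packet `(f, ℓ)` (the `ℓ`-th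
packet of frame `f`, `0`-indexed) arrives at time `a f ℓ`, arrival times are
nondecreasing within each frame, and every packet has deadline `a f ℓ + d`. -/
structure ArrivalSeq (n k d : ℕ) where
  a : Fin n → Fin k → ℕ
  mono : ∀ f : Fin n, Monotone (a f)

namespace ArrivalSeq

variable {n k d : ℕ}

/-- At most `b` packets arrive in any single time slot (maximum burst size `b`). -/
def BurstBound (A : ArrivalSeq n k d) (b : ℕ) : Prop :=
  ∀ t : ℕ, Set.ncard {p : Fin n × Fin k | A.a p.1 p.2 = t} ≤ b

/-- A feasible schedule: at most one packet is delivered per time slot, every packet is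
delivered at most once, and every delivered packet is delivered between its arrival
time and its deadline. -/
def IsSchedule (A : ArrivalSeq n k d) (S : ℕ → Option (Fin n × Fin k)) : Prop :=
  (∀ (p : Fin n × Fin k) (t t' : ℕ), S t = some p → S t' = some p → t = t') ∧
  ∀ (p : Fin n × Fin k) (t : ℕ), S t = some p →
    A.a p.1 p.2 ≤ t ∧ t ≤ A.a p.1 p.2 + d

/-- A frame is successful under schedule `S` if all of its packets are delivered. -/
def Successful (A : ArrivalSeq n k d) (S : ℕ → Option (Fin n × Fin k)) (f : Fin n) : Prop :=
  ∀ ℓ : Fin k, ∃ t : ℕ, S t = some (f, ℓ)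

/-- The goodput of a schedule: the number of successful frames. -/
noncomputable def Goodput (A : ArrivalSeq n k d) (S : ℕ → Option (Fin n × Fin k)) : ℕ :=
  Set.ncard {f : Fin n | A.Successful S f}

/-- `S` is an optimal (feasible) schedule for `A`. -/
def IsOptimal (A : ArrivalSeq n k d) (S : ℕ → Option (Fin n × Fin k)) : Prop :=
  A.IsSchedule S ∧
    ∀ S' : ℕ → Option (Fin n × Fin k), A.IsSchedule S' → A.Goodput S' ≤ A.Goodput S

end ArrivalSeq

/-! ## Executions of scheduling algorithms -/

/-- A trace of the execution of a scheduling algorithm on the arrival sequence `A`: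
`deliver t` is the packet delivered at the scheduling substep of slot `t` (if any), and
`dropTime p` is the slot at which packet `p` is dropped by the algorithm (if ever). -/
structure AlgExec {n k d : ℕ} (A : ArrivalSeq n k d) where
  deliver : ℕ → Option (Fin n × Fin k)
  dropTime : Fin n × Fin k → Option ℕ

namespace AlgExec

variable {n k d : ℕ} {A : ArrivalSeq n k d}

/-- packet `p` is delivered at some time `≤ t`. -/
def DeliveredBy (E : AlgExec A) (p : Fin n × Fin k) (t : ℕ) : Prop :=
  ∃ s ≤ t, E.deliver s = some p

/-- packet `p` is delivered at some point of the execution. -/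
def Delivered (E : AlgExec A) (p : Fin n × Fin k) : Prop :=
  ∃ s : ℕ, E.deliver s = some p

/-- packet `p` is dropped at some time `< t`. -/
def DroppedBefore (E : AlgExec A) (p : Fin n × Fin k) (t : ℕ) : Prop :=
  ∃ s < t, E.dropTime p = some s

/-- packet `p` is pending at (the scheduling substep of) slot `t`: it has arrived, its
deadline has not passed, and it has been neither delivered nor dropped before `t`. -/
def Pending (E : AlgExec A) (p : Fin n × Fin k) (t : ℕ) : Prop :=
  A.a p.1 p.2 ≤ t ∧ t ≤ A.a p.1 p.2 + d ∧
    ¬ (∃ s < t, E.deliver s = some p) ∧ ¬ E.DroppedBefore p t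

/-- frame `f` is alive at time `t`: none of its packets has been dropped before `t`,
nor has expired (i.e., reached its deadline undelivered) before `t`. -/
def Alive (E : AlgExec A) (f : Fin n) (t : ℕ) : Prop :=
  ∀ ℓ : Fin k, ¬ E.DroppedBefore (f, ℓ) t ∧
    (A.a f ℓ + d < t → E.DeliveredBy (f, ℓ) (A.a f ℓ + d))

/-- frame `f` has some pending packet at time `t`. -/
def HasPending (E : AlgExec A) (f : Fin n) (t : ℕ) : Prop :=
  ∃ ℓ : Fin k, E.Pending (f, ℓ) t

/-- `I_t(f)`: the index of the first (minimal-index) pending packet of `f` at time `t`. -/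
noncomputable def Iidx (E : AlgExec A) (t : ℕ) (f : Fin n) : ℕ :=
  sInf {ℓ : ℕ | ∃ h : ℓ < k, E.Pending (f, ⟨ℓ, h⟩) t}

/-- frame `f` is completed by the execution: all of its packets are delivered. -/
def Completed (E : AlgExec A) (f : Fin n) : Prop :=
  ∀ ℓ : Fin k, E.Delivered (f, ℓ)

/-- `w f`: the number of packets of frame `f` delivered by the execution. -/
noncomputable def w (E : AlgExec A) (f : Fin n) : ℕ :=
  Set.ncard {ℓ : Fin k | E.Delivered (f, ℓ)}

/-- the first time at which some packet of `f` is dropped. -/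
noncomputable def dropT (E : AlgExec A) (f : Fin n) : ℕ :=
  sInf {t : ℕ | ∃ ℓ : Fin k, E.dropTime (f, ℓ) = some t}

/-- the index of the first packet of `f` to be dropped (the minimal index among the
packets of `f` dropped at the first drop time of `f`). -/
noncomputable def firstDropIdx (E : AlgExec A) (f : Fin n) : ℕ :=
  sInf {ℓ : ℕ | ∃ h : ℓ < k, E.dropTime (f, ⟨ℓ, h⟩) = some (E.dropT f)}

/-! ### The algorithm `ProactiveGreedy` -/

/-- The defining conditions of an execution of `ProactiveGreedy` (with arbitrary
tie-breaking): at every slot `t`,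
(i) a delivered packet is the first pending packet of an alive frame maximizing
`I_t` among all alive frames with pending packets;
(ii) a packet is delivered whenever some alive frame has a pending packet; and
(iii) a packet is dropped at `t` exactly when it is pending at `t` and either its
frame is not alive at `t` (line 1 of the algorithm) or the packet delivered at `t`
belongs to a different frame (line 4: packets of all non-chosen frames are dropped). -/
def PGValid (E : AlgExec A) : Prop :=
  (∀ (t : ℕ) (f : Fin n) (ℓ : Fin k), E.deliver t = some (f, ℓ) →
      E.Alive f t ∧ E.Pending (f, ℓ) t ∧ (ℓ : ℕ) = E.Iidx t f ∧
      ∀ f' : Fin n, E.Alive f' t → E.HasPending f' t → E.Iidx t f' ≤ E.Iidx t f) ∧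
  (∀ t : ℕ, (∃ f : Fin n, E.Alive f t ∧ E.HasPending f t) → E.deliver t ≠ none) ∧
  (∀ (p : Fin n × Fin k) (t : ℕ), E.dropTime p = some t ↔
      E.Pending p t ∧
        (¬ E.Alive p.1 t ∨ ∃ q : Fin n × Fin k, E.deliver t = some q ∧ q.1 ≠ p.1))

/-! ### The mapping `φ` used in the analysis of `ProactiveGreedy` -/

open Classical in
/-- The frame onto which a frame `f ∉ F_PG` is *directly* mapped by the mapping `φ`:
the frame whose packet is delivered at the time `t_f` at which the first packet of `f`
is dropped.  Frames of `F_PG` are mapped to themselves. -/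
noncomputable def phiNext (E : AlgExec A) (f : Fin n) : Fin n :=
  if E.Completed f then f
  else
    match E.deliver (E.dropT f) with
    | some q => q.1
    | none => f

/-- the frame onto which `f` is mapped after `j` successive (re-)mappings of `φ`. -/
noncomputable def phiChain (E : AlgExec A) (f : Fin n) (j : ℕ) : Fin n :=
  (E.phiNext)^[j] f

/-- frame `f` is *directly* mapped by `φ` via the packet `q` (of the frame `q.1`):
`q` is the packet delivered at the time the first packet of `f` is dropped. -/
def PhiDirectVia (E : AlgExec A) (f : Fin n) (q : Fin n × Fin k) : Prop :=
  ¬ E.Completed f ∧ E.deliver (E.dropT f) = some q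

/-- frame `f` is mapped (directly or indirectly, i.e. after re-mappings) by `φ`
via the packet `q`; `M(q)` is the set of frames mapped via `q`. -/
def PhiMappedVia (E : AlgExec A) (f : Fin n) (q : Fin n × Fin k) : Prop :=
  ∃ j : ℕ, E.PhiDirectVia (E.phiChain f j) q

/-! ### The algorithm `Greedy` -/

/-- packet `p` is still pending after the scheduling substep of slot `t`. -/
def PendingAfter (E : AlgExec A) (p : Fin n × Fin k) (t : ℕ) : Prop :=
  E.Pending p t ∧ E.deliver t ≠ some p

/-- frame `f` is infeasible after the scheduling substep of slot `t`: for some pending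
packet `(f, ℓ)` the pending packets of `f` of index `≤ ℓ` cannot all be scheduled in
the slots `t+1, …, a f ℓ + d`. -/
noncomputable def Infeasible (E : AlgExec A) (f : Fin n) (t : ℕ) : Prop :=
  ∃ ℓ : Fin k, E.PendingAfter (f, ℓ) t ∧
    A.a f ℓ + d < t + Set.ncard {j : Fin k | j ≤ ℓ ∧ E.PendingAfter (f, j) t}

/-- The defining conditions of an execution of `Greedy` (with arbitrary tie-breaking):
at every slot `t`,
(i) a delivered packet is the first pending packet of an alive frame maximizing `I_t`
among all alive frames with pending packets;
(ii) a packet is delivered whenever some alive frame has a pending packet; and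
(iii) a packet is dropped at `t` exactly when it is pending at `t`, it is not the
packet delivered at `t`, and either its frame is not alive at `t`, or its residual
slack at `t` is `0` (it expires), or its frame becomes infeasible at `t` (cleanup). -/
noncomputable def GreedyValid (E : AlgExec A) : Prop :=
  (∀ (t : ℕ) (f : Fin n) (ℓ : Fin k), E.deliver t = some (f, ℓ) →
      E.Alive f t ∧ E.Pending (f, ℓ) t ∧ (ℓ : ℕ) = E.Iidx t f ∧
      ∀ f' : Fin n, E.Alive f' t → E.HasPending f' t → E.Iidx t f' ≤ E.Iidx t f) ∧
  (∀ t : ℕ, (∃ f : Fin n, E.Alive f t ∧ E.HasPending f t) → E.deliver t ≠ none) ∧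
  (∀ (p : Fin n × Fin k) (t : ℕ), E.dropTime p = some t ↔
      E.Pending p t ∧ E.deliver t ≠ some p ∧
        (¬ E.Alive p.1 t ∨ A.a p.1 p.2 + d = t ∨ E.Infeasible p.1 t))

/-- packet `p = (f, ℓ)` is *eligible* at time `t`: it is in the buffer (pending) at
`t`, its frame is alive at `t`, and `ℓ = I_t(f)`. -/
def Eligible (E : AlgExec A) (p : Fin n × Fin k) (t : ℕ) : Prop :=
  E.Alive p.1 t ∧ E.Pending p t ∧ (p.2 : ℕ) = E.Iidx t p.1

/-! ### The mapping `ψ` used in the analysis of `Greedy` -/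

/-- The mapping `ψ` used in the analysis of `Greedy`, relative to the set `O` of frames
of a fixed optimal schedule and the maximum burst size `b`.  Every frame of
`F_G` (completed by `Greedy`) is mapped to itself (encoded as `dm f = none`); every
frame `f ∉ F_G` is directly mapped via a packet `q` delivered by `Greedy` no later than
the drop time `t_f` of `f`, whose index is at least the index of the first dropped
packet of `f`; every delivered packet has at most `2` frames of `O` and at most `b`
frames in total directly mapped to it. -/
structure PsiMapping (E : AlgExec A) (O : Set (Fin n)) (b : ℕ) where
  dm : Fin n → Option (Fin n × Fin k)
  mapsSelf : ∀ f : Fin n, E.Completed f → dm f = none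
  mapsAll : ∀ f : Fin n, ¬ E.Completed f → ∃ q : Fin n × Fin k, dm f = some q
  viaValid : ∀ (f : Fin n) (q : Fin n × Fin k), dm f = some q →
    E.firstDropIdx f ≤ (q.2 : ℕ) ∧ ∃ t ≤ E.dropT f, E.deliver t = some q
  capO : ∀ q : Fin n × Fin k, Set.ncard {f : Fin n | f ∈ O ∧ dm f = some q} ≤ 2
  capAll : ∀ q : Fin n × Fin k, Set.ncard {f : Fin n | dm f = some q} ≤ b

namespace PsiMapping

variable {E : AlgExec A} {O : Set (Fin n)} {b : ℕ}

/-- the frame onto which `f` is directly mapped by `ψ` (itself, if `f ∈ F_G`). -/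
def next (M : PsiMapping E O b) (f : Fin n) : Fin n :=
  match M.dm f with
  | some q => q.1
  | none => f

/-- the frame onto which `f` is mapped after `j` successive (re-)mappings of `ψ`. -/
def chain (M : PsiMapping E O b) (f : Fin n) (j : ℕ) : Fin n :=
  (M.next)^[j] f

/-- frame `f` is mapped (directly or indirectly) by `ψ` via the packet `q`;
`M(q)` is the set of frames mapped via `q`. -/
def MappedVia (M : PsiMapping E O b) (f : Fin n) (q : Fin n × Fin k) : Prop :=
  ∃ j : ℕ, M.dm (M.chain f j) = some q

end PsiMapping

end AlgExec

/-!
Charge every frame `f` that `Greedy` fails to complete to the slot at which the packet `p` of `f`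
that is dropped first became eligible. From that slot until the drop, `p` is eligible, so `Greedy`
keeps delivering packets whose index is at least that of `p`, which in turn exceeds the index of
every packet of `f` ever delivered.

If `p` became eligible later than it arrived, then `f` was served in the preceding slot. Hence at
most one such packet is charged to each slot, and if there is one, then the packet delivered in the
slot, which beats the one served just before, has only just arrived. So at most `b` frames are
charged to any slot, and the number `N j` of slots delivering a packet of index at least `j`
satisfies `N j ≤ |F_G| + (1 + b) * N (j + 1)`.

On the other hand `|O \ F_G| ≤ 2 * N 0`: lost frames whose `p` was eligible on arrival are instead
charged to a slot, between arrival and drop, at which the other schedule serves the frame. Such a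
slot exists because the frame becomes infeasible when `p` is dropped.
-/

theorem le_mul_geom_sum_add_pow_mul {R : Type*} [CommSemiring R] [PartialOrder R]
    [IsOrderedRing R] {u : ℕ → R} {a r : R} (hr : 0 ≤ r) {m : ℕ}
    (hu : ∀ j < m, u j ≤ a + r * u (j + 1)) :
    u 0 ≤ a * ∑ i ∈ Finset.range m, r ^ i + r ^ m * u m := by
  induction m generalizing u with
  | zero => simp
  | succ m ih =>
    have ih : u 1 ≤ a * ∑ i ∈ Finset.range m, r ^ i + r ^ m * u (m + 1) :=
      ih (u := fun j => u (j + 1)) fun j hj => hu (j + 1) (by lia)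
    calc u 0 ≤ a + r * u 1 := hu 0 m.succ_pos
      _ ≤ a + r * (a * ∑ i ∈ Finset.range m, r ^ i + r ^ m * u (m + 1)) := by gcongr
      _ = a * ∑ i ∈ Finset.range (m + 1), r ^ i + r ^ (m + 1) * u (m + 1) := by
        rw [geom_sum_succ]; ring

theorem one_add_pow_le_exp_one_mul_pow {x : ℝ} (hx : 0 < x) {m : ℕ} (hm : m ≤ x) :
    (1 + x) ^ m ≤ Real.exp 1 * x ^ m := by
  calc (1 + x) ^ m = (x⁻¹ + 1) ^ m * x ^ m := by rw [← mul_pow, add_mul, inv_mul_cancel₀ hx.ne',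
        one_mul]
    _ ≤ Real.exp x⁻¹ ^ m * x ^ m := by gcongr; exact Real.add_one_le_exp _
    _ = Real.exp (m * x⁻¹) * x ^ m := by rw [Real.exp_nat_mul]
    _ ≤ Real.exp 1 * x ^ m := by gcongr; rwa [← div_eq_mul_inv, div_le_one₀ hx]

theorem geom_sum_one_add_le_exp_one_mul_pow {x : ℝ} {m : ℕ} (hm : m + 1 ≤ x) :
    ∑ i ∈ Finset.range (m + 1), (1 + x) ^ i ≤ Real.exp 1 * x ^ m := by
  have hx : 0 < x := lt_of_lt_of_le (by positivity) hm
  refine le_of_mul_le_mul_right ?_ hx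
  calc (∑ i ∈ Finset.range (m + 1), (1 + x) ^ i) * x = (1 + x) ^ (m + 1) - 1 := by
        simpa using geom_sum_mul (1 + x) (m + 1)
    _ ≤ (1 + x) ^ (m + 1) := by linarith
    _ ≤ Real.exp 1 * x ^ (m + 1) := one_add_pow_le_exp_one_mul_pow hx (by exact_mod_cast hm)
    _ = Real.exp 1 * x ^ m * x := by ring

theorem ncard_le_mul_ncard_of_mapsTo {α β : Type*} {s : Set α} {t : Set β} {g : α → β}
    (hs : s.Finite) (ht : t.Finite) (hg : Set.MapsTo g s t) {m : ℕ}
    (hm : ∀ y ∈ t, {x ∈ s | g x = y}.ncard ≤ m) : s.ncard ≤ m * t.ncard := by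
  classical
  lift s to Finset α using hs
  lift t to Finset β using ht
  simp only [Set.ncard_coe_finset]
  refine Finset.card_le_mul_card_image_of_maps_to hg m fun y hy => ?_
  simpa only [← Set.ncard_coe_finset, Finset.coe_filter, Finset.mem_coe] using hm y hy

namespace AlgExec

variable {n k d b : ℕ} {A : ArrivalSeq n k d} {E : AlgExec A} {f : Fin n}
  {p q : Fin n × Fin k} {s t : ℕ} {S : ℕ → Option (Fin n × Fin k)}

theorem Pending.of_le (h : E.Pending p t) (hst : s ≤ t) (ha : A.a p.1 p.2 ≤ s) :
    E.Pending p s :=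
  ⟨ha, hst.trans h.2.1, fun ⟨u, hu, hdel⟩ => h.2.2.1 ⟨u, hu.trans_le hst, hdel⟩,
    fun ⟨u, hu, hdrop⟩ => h.2.2.2 ⟨u, hu.trans_le hst, hdrop⟩⟩

theorem eligible_iff : E.Eligible p t ↔
    E.Alive p.1 t ∧ E.Pending p t ∧ ∀ j, E.Pending (p.1, j) t → p.2 ≤ j := by
  refine and_congr_right fun _ => and_congr_right fun hp => ⟨fun hI j hj => ?_, fun hmin => ?_⟩
  · exact Fin.le_def.2 (hI.trans_le (Nat.sInf_le ⟨j.2, hj⟩))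
  · obtain ⟨hlt, hpend⟩ := Nat.sInf_mem (s := {ℓ | ∃ h : ℓ < k, E.Pending (p.1, ⟨ℓ, h⟩) t})
      ⟨p.2, p.2.2, hp⟩
    exact le_antisymm (hmin ⟨_, hlt⟩ hpend) (Nat.sInf_le ⟨p.2.2, hp⟩)

theorem Eligible.le_of_pending {j : Fin k} (h : E.Eligible p t) (hj : E.Pending (p.1, j) t) :
    p.2 ≤ j :=
  (eligible_iff.1 h).2.2 j hj

theorem Eligible.eq_of_fst_eq (hp : E.Eligible p t) (hq : E.Eligible q t) (h : p.1 = q.1) :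
    p = q :=
  Prod.ext h (Fin.ext (by rw [hp.2.2, hq.2.2, h]))

theorem Alive.exists_eligible (h : E.Alive f t) (hf : E.HasPending f t) :
    ∃ ℓ, E.Eligible (f, ℓ) t := by
  obtain ⟨ℓ, hℓ, hmin⟩ := WellFounded.has_min wellFounded_lt {ℓ | E.Pending (f, ℓ) t} hf
  exact ⟨ℓ, eligible_iff.2 ⟨h, hℓ, fun j hj => not_lt.1 (hmin j hj)⟩⟩

theorem Infeasible.exists_schedule_le (h : E.Infeasible f t)
    (hS : A.IsSchedule S) (hf : A.Successful S f) :
    ∃ j, E.Pending (f, j) t ∧ ∃ u ≤ t, S u = some (f, j) := by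
  obtain ⟨ℓ, hℓ, hslots⟩ := h
  choose τ hτ using hf
  by_contra! hlate
  set X := {j : Fin k | j ≤ ℓ ∧ E.PendingAfter (f, j) t}
  have hmaps : ∀ j ∈ X, τ j ∈ Set.Ioc t (A.a f ℓ + d) := fun j hj =>
    ⟨not_le.1 fun hle => hlate j hj.2.1 _ hle (hτ j),
      (hS.2 _ _ (hτ j)).2.trans (Nat.add_le_add_right (A.mono f hj.1) d)⟩
  have hinj : Set.InjOn τ X := fun i _ j _ hij => by
    simpa using (hτ i).symm.trans ((congrArg S hij).trans (hτ j))
  have hcard := Set.ncard_le_ncard_of_injOn τ hmaps hinj (Set.finite_Ioc _ _)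
  rw [← Finset.coe_Ioc, Set.ncard_coe_finset, Nat.card_Ioc] at hcard
  have := hℓ.1.2.1
  lia

/-- `p` is the first packet of its frame to be dropped, namely at slot `t`. Eligibility encodes
that nothing of the frame was dropped before, and that `p` has the least index among the packets
that could be dropped at `t`. -/
def FirstDrop (E : AlgExec A) (p : Fin n × Fin k) (t : ℕ) : Prop :=
  E.Eligible p t ∧ E.dropTime p = some t

/-- The packets that are the first of their frame to be dropped. -/
def firstDrops (E : AlgExec A) : Set (Fin n × Fin k) :=
  {p | ∃ t, E.FirstDrop p t}

/-- The first slot at which the packet `p` is eligible; `0` if there is none. -/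
noncomputable def eligT (E : AlgExec A) (p : Fin n × Fin k) : ℕ :=
  sInf {t | E.Eligible p t}

/-- The slots at which a packet of index at least `m` is delivered. -/
def deliverySlots (E : AlgExec A) (m : ℕ) : Set ℕ :=
  {t | ∃ q, E.deliver t = some q ∧ m ≤ q.2}

theorem Eligible.eligT_le (h : E.Eligible p t) : E.eligT p ≤ t :=
  Nat.sInf_le h

theorem Eligible.eligible_eligT (h : E.Eligible p t) : E.Eligible p (E.eligT p) :=
  Nat.sInf_mem (s := {t | E.Eligible p t}) ⟨t, h⟩

namespace GreedyValid

theorem alive_iff (hE : E.GreedyValid) : E.Alive f t ↔ ∀ ℓ, ¬ E.DroppedBefore (f, ℓ) t := by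
  refine ⟨fun h ℓ => (h ℓ).1, fun h ℓ => ⟨h ℓ, fun hexp => ?_⟩⟩
  by_contra hdel
  have hpend : E.Pending (f, ℓ) (A.a f ℓ + d) :=
    ⟨Nat.le_add_right _ _, le_rfl, fun ⟨u, hu, hud⟩ => hdel ⟨u, hu.le, hud⟩,
      fun ⟨u, hu, hud⟩ => h ℓ ⟨u, hu.trans hexp, hud⟩⟩
  exact h ℓ ⟨_, hexp, (hE.2.2 _ _).2 ⟨hpend, fun hd => hdel ⟨_, le_rfl, hd⟩, .inr (.inl rfl)⟩⟩

theorem alive_of_le (hE : E.GreedyValid) (h : E.Alive f t) (hst : s ≤ t) : E.Alive f s :=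
  hE.alive_iff.2 fun ℓ ⟨u, hu, hdrop⟩ => (h ℓ).1 ⟨u, hu.trans_le hst, hdrop⟩

theorem eligible_of_deliver (hE : E.GreedyValid) (h : E.deliver t = some q) : E.Eligible q t :=
  let ⟨halive, hpend, hI, _⟩ := hE.1 t q.1 q.2 h
  ⟨halive, hpend, hI⟩

theorem exists_deliver_of_eligible (hE : E.GreedyValid) (h : E.Eligible p t) :
    ∃ q, E.deliver t = some q ∧ p.2 ≤ q.2 := by
  have hpend : E.HasPending p.1 t := ⟨p.2, h.2.1⟩
  obtain ⟨q, hq⟩ := Option.ne_none_iff_exists'.1 (hE.2.1 t ⟨p.1, h.1, hpend⟩)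
  obtain ⟨-, -, hI, hmax⟩ := hE.1 t q.1 q.2 hq
  exact ⟨q, hq, Fin.le_def.2 (h.2.2.trans_le ((hmax p.1 h.1 hpend).trans_eq hI.symm))⟩

theorem deliver_inj (hE : E.GreedyValid) (hs : E.deliver s = some p) (ht : E.deliver t = some p) :
    s = t := by
  by_contra hne
  rcases lt_or_gt_of_ne hne with h | h
  · exact (hE.eligible_of_deliver ht).2.1.2.2.1 ⟨s, h, hs⟩
  · exact (hE.eligible_of_deliver hs).2.1.2.2.1 ⟨t, h, ht⟩

theorem pending_succ (hE : E.GreedyValid) (hp : E.Pending p t) (halive : E.Alive p.1 (t + 1))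
    (hdel : E.deliver t ≠ some p) : E.Pending p (t + 1) := by
  have hdrop : ¬ E.DroppedBefore p (t + 1) := (halive p.2).1
  have hexp : A.a p.1 p.2 + d ≠ t := fun h =>
    hdrop ⟨t, t.lt_succ_self, (hE.2.2 p t).2 ⟨hp, hdel, .inr (.inl h)⟩⟩
  obtain ⟨harr, hle, hnd, -⟩ := hp
  refine ⟨harr.trans t.le_succ, by lia, fun ⟨u, hu, hud⟩ => ?_, hdrop⟩
  rcases (Nat.lt_succ_iff.1 hu).lt_or_eq with hlt | rfl
  · exact hnd ⟨u, hlt, hud⟩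
  · exact hdel hud

theorem not_infeasible_of_deliver (hE : E.GreedyValid) (hkd : k ≤ d + 1)
    (h : E.deliver t = some p) : ¬ E.Infeasible p.1 t := by
  rintro ⟨ℓ, hℓ, hslots⟩
  have helig := hE.eligible_of_deliver h
  set X : ℕ → Set (Fin k) := fun t => {j | j ≤ ℓ ∧ E.PendingAfter (p.1, j) t}
  have hinsert : (insert p.2 (X t)).ncard = (X t).ncard + 1 :=
    Set.ncard_insert_of_notMem fun hmem => hmem.2.2 h
  rcases hℓ.1.1.eq_or_lt with harr | harr
  · have := Set.ncard_le_card (insert p.2 (X t))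
    simp only [Nat.card_eq_fintype_card, Fintype.card_fin] at this harr
    lia
  -- The frame was already infeasible in the previous slot, so it is no longer alive.
  obtain ⟨t, rfl⟩ := Nat.exists_eq_add_one_of_ne_zero (Nat.ne_zero_of_lt harr)
  have hprev : ∀ j ≤ ℓ, E.Pending (p.1, j) (t + 1) → E.PendingAfter (p.1, j) t := fun j hj hp =>
    ⟨hp.of_le t.le_succ ((A.mono p.1 hj).trans (Nat.lt_succ_iff.1 harr)),
      fun hd => hp.2.2.1 ⟨t, t.lt_succ_self, hd⟩⟩
  have hsub : insert p.2 (X (t + 1)) ⊆ X t := by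
    rintro j (rfl | ⟨hj, hp⟩)
    · exact ⟨helig.le_of_pending hℓ.1, hprev _ (helig.le_of_pending hℓ.1) helig.2.1⟩
    · exact ⟨hj, hprev j hj hp.1⟩
  have hinf : E.Infeasible p.1 t :=
    ⟨ℓ, hprev ℓ le_rfl hℓ.1, by have := Set.ncard_le_ncard hsub; lia⟩
  have hpend := hprev ℓ le_rfl hℓ.1
  exact (helig.1 ℓ).1 ⟨t, t.lt_succ_self, (hE.2.2 _ t).2 ⟨hpend.1, hpend.2, .inr (.inr hinf)⟩⟩

theorem infeasible_of_dropTime (hE : E.GreedyValid) (halive : E.Alive p.1 t)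
    (h : E.dropTime p = some t) : E.Infeasible p.1 t := by
  obtain ⟨hpend, hdel, hcause⟩ := (hE.2.2 p t).1 h
  rcases hcause with hdead | hexp | hinf
  · exact absurd halive hdead
  · have : 0 < {j | j ≤ p.2 ∧ E.PendingAfter (p.1, j) t}.ncard :=
      (Set.ncard_pos (Set.toFinite _)).2 ⟨p.2, le_rfl, hpend, hdel⟩
    exact ⟨p.2, ⟨hpend, hdel⟩, by lia⟩
  · exact hinf

theorem exists_dropTime_of_not_completed (hE : E.GreedyValid) (hf : ¬ E.Completed f) :
    ∃ t ℓ, E.dropTime (f, ℓ) = some t := by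
  by_contra! hdrop
  refine hf fun ℓ => ?_
  have halive : E.Alive f (A.a f ℓ + d + 1) := hE.alive_iff.2 fun j ⟨u, _, hu⟩ => hdrop u j hu
  obtain ⟨u, -, hu⟩ := (halive ℓ).2 (Nat.lt_succ_self _)
  exact ⟨u, hu⟩

theorem exists_firstDrop (hE : E.GreedyValid) (hkd : k ≤ d + 1) (hf : ¬ E.Completed f) :
    ∃ ℓ t, E.FirstDrop (f, ℓ) t := by
  classical
  have hdrop := hE.exists_dropTime_of_not_completed hf
  obtain ⟨j, hj⟩ := Nat.find_spec hdrop
  set t := Nat.find hdrop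
  have halive : E.Alive f t := hE.alive_iff.2 fun i ⟨u, hu, hui⟩ => Nat.find_min hdrop hu ⟨i, hui⟩
  have hinf : E.Infeasible f t := hE.infeasible_of_dropTime halive hj
  obtain ⟨ℓ, hℓ⟩ := halive.exists_eligible ⟨j, ((hE.2.2 _ t).1 hj).1⟩
  have hdel : E.deliver t ≠ some (f, ℓ) := fun h => hE.not_infeasible_of_deliver hkd h hinf
  exact ⟨ℓ, t, hℓ, (hE.2.2 _ t).2 ⟨hℓ.2.1, hdel, .inr (.inr hinf)⟩⟩

theorem lt_of_deliver_of_firstDrop (hE : E.GreedyValid) {j : Fin k} (hp : E.FirstDrop p t)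
    (h : E.deliver s = some (p.1, j)) : j < p.2 := by
  by_contra! hle
  have helig := hE.eligible_of_deliver h
  have hst : s ≤ t := not_lt.1 fun hlt => (helig.1 p.2).1 ⟨t, hlt, hp.2⟩
  have hpend : E.Pending p s := hp.1.2.1.of_le hst ((A.mono p.1 hle).trans helig.2.1.1)
  obtain rfl : j = p.2 := le_antisymm (helig.le_of_pending hpend) hle
  rcases hst.lt_or_eq with hlt | rfl
  · exact hp.1.2.1.2.2.1 ⟨s, hlt, h⟩
  · exact ((hE.2.2 p s).1 hp.2).2.1 h

theorem eligible_of_le_of_le (hE : E.GreedyValid) {u : ℕ} (hs : E.Eligible p s)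
    (hu : E.Eligible p u) (hst : s ≤ t) (htu : t ≤ u) : E.Eligible p t := by
  refine eligible_iff.2 ⟨hE.alive_of_le hu.1 htu, hu.2.1.of_le htu (hs.2.1.1.trans hst), ?_⟩
  intro j hj
  by_contra! hlt
  exact hlt.not_ge (hs.le_of_pending (hj.of_le hst ((A.mono p.1 hlt.le).trans hs.2.1.1)))

theorem exists_deliver_of_eligT_ne (hE : E.GreedyValid) (h : E.Eligible p t)
    (hne : E.eligT p ≠ A.a p.1 p.2) :
    ∃ s, E.eligT p = s + 1 ∧ ∃ j < p.2, E.deliver s = some (p.1, j) := by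
  have helig := h.eligible_eligT
  have harr := helig.2.1.1.lt_of_ne' hne
  obtain ⟨s, hs⟩ := Nat.exists_eq_add_one_of_ne_zero (Nat.ne_zero_of_lt harr)
  rw [hs] at helig harr
  have hpend : E.Pending p s := helig.2.1.of_le s.le_succ (Nat.lt_succ_iff.1 harr)
  have hnot : ¬ E.Eligible p s := fun hp => by have := hp.eligT_le; lia
  simp only [eligible_iff, hE.alive_of_le helig.1 s.le_succ, hpend, true_and, not_forall,
    not_le] at hnot
  obtain ⟨j, hj, hlt⟩ := hnot
  refine ⟨s, hs, j, hlt, ?_⟩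
  by_contra hdel
  exact hlt.not_ge (helig.le_of_pending (hE.pending_succ hj helig.1 hdel))

theorem arrival_eq_of_deliver_succ (hE : E.GreedyValid) (hp : E.deliver t = some p)
    (hq : E.deliver (t + 1) = some q) (hne : p.1 ≠ q.1) (hlt : p.2 < q.2) :
    A.a q.1 q.2 = t + 1 := by
  have helig := hE.eligible_of_deliver hq
  refine le_antisymm helig.2.1.1 (Nat.succ_le_of_lt (not_le.1 fun harr => ?_))
  have hpend : E.Pending q t := helig.2.1.of_le t.le_succ harr
  obtain ⟨ℓ, hℓ⟩ := (hE.alive_of_le helig.1 t.le_succ).exists_eligible ⟨q.2, hpend⟩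
  have hndel : E.deliver t ≠ some (q.1, ℓ) := fun h =>
    hne (Prod.mk.inj (Option.some.inj (hp.symm.trans h))).1
  have hqℓ : q.2 ≤ ℓ := helig.le_of_pending (hE.pending_succ hℓ.2.1 helig.1 hndel)
  obtain ⟨p', hp', hℓp⟩ := hE.exists_deliver_of_eligible hℓ
  obtain rfl : p = p' := Option.some.inj (hp.symm.trans hp')
  exact (hlt.trans_le (hqℓ.trans hℓp)).false

theorem finite_deliverySlots (hE : E.GreedyValid) (m : ℕ) : (E.deliverySlots m).Finite :=
  Set.Finite.of_injOn (Set.mapsTo_univ E.deliver _)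
    (fun _ ⟨_, hq, _⟩ _ _ heq => hE.deliver_inj hq (heq.symm.trans hq)) Set.finite_univ

theorem injOn_eligT (hE : E.GreedyValid) :
    Set.InjOn E.eligT {p | (∃ t, E.Eligible p t) ∧ E.eligT p ≠ A.a p.1 p.2} := by
  rintro p ⟨⟨t, hp⟩, hpne⟩ q ⟨⟨u, hq⟩, hqne⟩ heq
  obtain ⟨s, hs, i, -, hi⟩ := hE.exists_deliver_of_eligT_ne hp hpne
  obtain ⟨s', hs', j, -, hj⟩ := hE.exists_deliver_of_eligT_ne hq hqne
  obtain rfl : s = s' := by lia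
  have hfst : p.1 = q.1 := (Prod.mk.inj (Option.some.inj (hi.symm.trans hj))).1
  exact hp.eligible_eligT.eq_of_fst_eq (heq ▸ hq.eligible_eligT) hfst

theorem ncard_firstDrops_eligT_eq_le (hE : E.GreedyValid) (hb : A.BurstBound b) (s : ℕ) :
    {p ∈ E.firstDrops | E.eligT p = s}.ncard ≤ b := by
  set arrivals := {p : Fin n × Fin k | A.a p.1 p.2 = s}
  by_cases hfresh : ∀ p ∈ E.firstDrops, E.eligT p = s → A.a p.1 p.2 = s
  · exact (Set.ncard_le_ncard fun p hp => hfresh p hp.1 hp.2).trans (hb s)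
  push Not at hfresh
  obtain ⟨p, ⟨t, hp⟩, rfl, hne⟩ := hfresh
  obtain ⟨r, hr, j, hj, hjdel⟩ := hE.exists_deliver_of_eligT_ne hp.1 hne.symm
  obtain ⟨q, hq, hpq⟩ := hE.exists_deliver_of_eligible hp.1.eligible_eligT
  have hq_arrival : q ∈ arrivals := by
    refine (hE.arrival_eq_of_deliver_succ hjdel (hr ▸ hq) (fun hfst => ?_) (hj.trans_le hpq)).trans
      hr.symm
    exact hpq.not_gt (hE.lt_of_deliver_of_firstDrop hp (hq.trans (by rw [hfst])))
  -- `q` is delivered, so it is not a first drop and makes room for `p`.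
  have hsub : {p' ∈ E.firstDrops | E.eligT p' = E.eligT p} ⊆ insert p (arrivals \ {q}) := by
    rintro p' ⟨⟨u, hp'⟩, heq⟩
    by_cases harr : A.a p'.1 p'.2 = E.eligT p
    · refine .inr ⟨harr, ?_⟩
      rintro rfl
      exact (hE.lt_of_deliver_of_firstDrop hp' hq).false
    · exact .inl (hE.injOn_eligT ⟨⟨u, hp'.1⟩, fun h => harr (h.symm.trans heq)⟩
        ⟨⟨t, hp.1⟩, hne.symm⟩ heq)
  calc _ ≤ (insert p (arrivals \ {q})).ncard := Set.ncard_le_ncard hsub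
    _ ≤ (arrivals \ {q}).ncard + 1 := Set.ncard_insert_le _ _
    _ = arrivals.ncard := Set.ncard_sdiff_singleton_add_one hq_arrival
    _ ≤ b := hb _

theorem ncard_firstDrops_index_le (hE : E.GreedyValid) (hb : A.BurstBound b) (m : ℕ) :
    {p ∈ E.firstDrops | m ≤ (p.2 : ℕ)}.ncard ≤ b * (E.deliverySlots m).ncard := by
  refine ncard_le_mul_ncard_of_mapsTo (g := E.eligT) (Set.toFinite _)
    (hE.finite_deliverySlots m) ?_ fun s _ => ?_
  · rintro p ⟨⟨t, hp⟩, hm⟩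
    obtain ⟨q, hq, hpq⟩ := hE.exists_deliver_of_eligible hp.1.eligible_eligT
    exact ⟨q, hq, hm.trans hpq⟩
  · refine (Set.ncard_le_ncard ?_).trans (hE.ncard_firstDrops_eligT_eq_le hb s)
    exact fun p hp => ⟨hp.1.1, hp.2⟩

theorem ncard_deliver_index_eq_le (hE : E.GreedyValid) (hkd : k ≤ d + 1) (j : Fin k) :
    {t | ∃ f, E.deliver t = some (f, j)}.ncard ≤
      {f | E.Completed f}.ncard + {p ∈ E.firstDrops | (j : ℕ) + 1 ≤ p.2}.ncard := by
  set frames := {f | E.Completed f} ∪ Prod.fst '' {p ∈ E.firstDrops | (j : ℕ) + 1 ≤ p.2}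
  have hmaps : ∀ t ∈ {t | ∃ f, E.deliver t = some (f, j)},
      E.deliver t ∈ (fun f => some (f, j)) '' frames := by
    rintro t ⟨f, hf⟩
    refine ⟨f, ?_, hf.symm⟩
    by_cases hcomp : E.Completed f
    · exact .inl hcomp
    · obtain ⟨ℓ, u, hdrop⟩ := hE.exists_firstDrop hkd hcomp
      exact .inr ⟨_, ⟨⟨u, hdrop⟩, hE.lt_of_deliver_of_firstDrop hdrop hf⟩, rfl⟩
  calc _ ≤ ((fun f => some (f, j)) '' frames).ncard :=
        Set.ncard_le_ncard_of_injOn E.deliver hmaps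
          fun _ ⟨_, hf⟩ _ _ heq => hE.deliver_inj hf (heq.symm.trans hf)
    _ ≤ frames.ncard := Set.ncard_image_le
    _ ≤ _ := Set.ncard_union_le _ _
    _ ≤ _ := Nat.add_le_add_left Set.ncard_image_le _

theorem ncard_deliverySlots_le_add_mul (hE : E.GreedyValid) (hkd : k ≤ d + 1)
    (hb : A.BurstBound b) {j : ℕ} (hj : j < k) :
    (E.deliverySlots j).ncard ≤
      {f | E.Completed f}.ncard + (1 + b) * (E.deliverySlots (j + 1)).ncard := by
  have hsplit : E.deliverySlots j ⊆
      {t | ∃ f, E.deliver t = some (f, ⟨j, hj⟩)} ∪ E.deliverySlots (j + 1) := by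
    rintro t ⟨⟨f, i⟩, hi, hle⟩
    rcases hle.eq_or_lt with rfl | hlt
    · exact .inl ⟨f, hi⟩
    · exact .inr ⟨_, hi, hlt⟩
  have hfin : {t | ∃ f, E.deliver t = some (f, ⟨j, hj⟩)}.Finite :=
    (hE.finite_deliverySlots j).subset fun t ⟨f, hf⟩ => ⟨_, hf, le_rfl⟩
  have hunion := (Set.ncard_le_ncard hsplit (hfin.union (hE.finite_deliverySlots _))).trans
    (Set.ncard_union_le _ _)
  have hindex := hE.ncard_deliver_index_eq_le hkd ⟨j, hj⟩
  have hdrops := hE.ncard_firstDrops_index_le hb (j + 1)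
  linarith

theorem ncard_deliverySlots_zero_le (hE : E.GreedyValid) (hkd : k ≤ d + 1)
    (hb : A.BurstBound b) :
    (E.deliverySlots 0).ncard ≤
      {f | E.Completed f}.ncard * ∑ i ∈ Finset.range k, (1 + b) ^ i := by
  have hk : E.deliverySlots k = ∅ :=
    Set.eq_empty_of_forall_notMem fun t ⟨q, _, hle⟩ => q.2.2.not_ge hle
  simpa [hk] using le_mul_geom_sum_add_pow_mul (u := fun j => (E.deliverySlots j).ncard)
    (Nat.zero_le _) fun j hj => hE.ncard_deliverySlots_le_add_mul hkd hb hj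

theorem exists_schedule_slot_of_firstDrop (hE : E.GreedyValid) (hp : E.FirstDrop p t)
    (hS : A.IsSchedule S) (hsucc : A.Successful S p.1) :
    ∃ u, A.a p.1 p.2 ≤ u ∧ u ≤ t ∧ ∃ j, S u = some (p.1, j) := by
  obtain ⟨j, hj, u, hut, hu⟩ :=
    (hE.infeasible_of_dropTime hp.1.1 hp.2).exists_schedule_le hS hsucc
  exact ⟨u, (A.mono p.1 (hp.1.le_of_pending hj)).trans (hS.2 _ _ hu).1, hut, j, hu⟩

theorem ncard_firstDrops_eligT_ne_arrival_le (hE : E.GreedyValid) :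
    {p ∈ E.firstDrops | E.eligT p ≠ A.a p.1 p.2}.ncard ≤ (E.deliverySlots 0).ncard := by
  refine Set.ncard_le_ncard_of_injOn E.eligT ?_ (hE.injOn_eligT.mono ?_)
    (hE.finite_deliverySlots 0)
  · rintro p ⟨⟨t, hp⟩, -⟩
    obtain ⟨q, hq, -⟩ := hE.exists_deliver_of_eligible hp.1.eligible_eligT
    exact ⟨q, hq, Nat.zero_le _⟩
  · rintro p ⟨⟨t, hp⟩, hne⟩
    exact ⟨⟨t, hp.1⟩, hne⟩

theorem ncard_successful_eligT_eq_arrival_le (hE : E.GreedyValid) (hS : A.IsSchedule S) :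
    {f | A.Successful S f ∧ ∃ ℓ, (f, ℓ) ∈ E.firstDrops ∧ E.eligT (f, ℓ) = A.a f ℓ}.ncard ≤
      (E.deliverySlots 0).ncard := by
  set X := {f | A.Successful S f ∧ ∃ ℓ, (f, ℓ) ∈ E.firstDrops ∧ E.eligT (f, ℓ) = A.a f ℓ}
  have hslot : ∀ f ∈ X, ∃ u ∈ E.deliverySlots 0, ∃ j, S u = some (f, j) := by
    rintro f ⟨hsucc, ℓ, ⟨t, hdrop⟩, harr⟩
    obtain ⟨u, hau, hut, hu⟩ := hE.exists_schedule_slot_of_firstDrop hdrop hS hsucc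
    obtain ⟨q, hq, -⟩ := hE.exists_deliver_of_eligible
      (hE.eligible_of_le_of_le hdrop.1.eligible_eligT hdrop.1 (harr.trans_le hau) hut)
    exact ⟨u, ⟨q, hq, Nat.zero_le _⟩, hu⟩
  choose! slot hdel hserve using hslot
  refine Set.ncard_le_ncard_of_injOn slot hdel (fun f hf g hg heq => ?_)
    (hE.finite_deliverySlots 0)
  obtain ⟨i, hi⟩ := hserve f hf
  obtain ⟨j, hj⟩ := hserve g hg
  exact (Prod.mk.inj (Option.some.inj (hi.symm.trans ((congrArg S heq).trans hj)))).1

theorem ncard_successful_not_completed_le_two_mul (hE : E.GreedyValid) (hkd : k ≤ d + 1)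
    (hS : A.IsSchedule S) :
    {f | A.Successful S f ∧ ¬ E.Completed f}.ncard ≤ 2 * (E.deliverySlots 0).ncard := by
  have hsub : {f | A.Successful S f ∧ ¬ E.Completed f} ⊆
      Prod.fst '' {p ∈ E.firstDrops | E.eligT p ≠ A.a p.1 p.2} ∪
      {f | A.Successful S f ∧ ∃ ℓ, (f, ℓ) ∈ E.firstDrops ∧ E.eligT (f, ℓ) = A.a f ℓ} := by
    rintro f ⟨hsucc, hf⟩
    obtain ⟨ℓ, hdrop⟩ := hE.exists_firstDrop hkd hf
    by_cases harr : E.eligT (f, ℓ) = A.a f ℓ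
    · exact .inr ⟨hsucc, ℓ, hdrop, harr⟩
    · exact .inl ⟨(f, ℓ), ⟨hdrop, harr⟩, rfl⟩
  rw [two_mul]
  exact (Set.ncard_le_ncard hsub).trans <| (Set.ncard_union_le _ _).trans <|
    add_le_add ((Set.ncard_image_le (Set.toFinite _)).trans hE.ncard_firstDrops_eligT_ne_arrival_le)
      (hE.ncard_successful_eligT_eq_arrival_le hS)

theorem ncard_successful_not_completed_le (hE : E.GreedyValid) (hkd : k ≤ d + 1)
    (hb : A.BurstBound b) (hS : A.IsSchedule S) :
    {f | A.Successful S f ∧ ¬ E.Completed f}.ncard ≤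
      {f | E.Completed f}.ncard * (2 * ∑ i ∈ Finset.range k, (1 + b) ^ i) := by
  have hslots := hE.ncard_deliverySlots_zero_le hkd hb
  have hlost := hE.ncard_successful_not_completed_le_two_mul hkd hS
  linarith

end GreedyValid

end AlgExec

theorem greedy_competitive_ratio_general {n k d b : ℕ} {A : ArrivalSeq n k d} {E : AlgExec A}
    {S : ℕ → Option (Fin n × Fin k)} (hkd : k ≤ d + 1) (hb : A.BurstBound b)
    (hE : E.GreedyValid) (hS : A.IsSchedule S) :
    {f | A.Successful S f ∧ ¬ E.Completed f}.ncard ≤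
        {f | E.Completed f}.ncard * (2 * ∑ i ∈ Finset.range k, (1 + b) ^ i) ∧
      (1 ≤ k → k ≤ b → ({f | A.Successful S f}.ncard : ℝ) ≤
        (1 + 2 * Real.exp 1) * (b : ℝ) ^ (k - 1) * {f | E.Completed f}.ncard) := by
  have hlost := hE.ncard_successful_not_completed_le hkd hb hS
  refine ⟨hlost, fun hk hkb => ?_⟩
  obtain ⟨m, rfl⟩ := Nat.exists_eq_add_of_le' hk
  have hsplit : {f | A.Successful S f} ⊆
      {f | E.Completed f} ∪ {f | A.Successful S f ∧ ¬ E.Completed f} := fun f hf =>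
    or_iff_not_imp_left.2 fun hcomp => ⟨hf, hcomp⟩
  have hO := (Set.ncard_le_ncard hsplit).trans (Set.ncard_union_le _ _)
  have hgeom : ∑ i ∈ Finset.range (m + 1), (1 + (b : ℝ)) ^ i ≤ Real.exp 1 * (b : ℝ) ^ m :=
    geom_sum_one_add_le_exp_one_mul_pow (by exact_mod_cast hkb)
  have hpow : 1 ≤ (b : ℝ) ^ m := one_le_pow₀ (by exact_mod_cast hk.trans hkb)
  set G := {f | E.Completed f}.ncard
  calc ({f | A.Successful S f}.ncard : ℝ)
      ≤ G + G * (2 * ∑ i ∈ Finset.range (m + 1), (1 + (b : ℝ)) ^ i) := by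
        exact_mod_cast hO.trans (Nat.add_le_add_left hlost G)
    _ = (1 + 2 * ∑ i ∈ Finset.range (m + 1), (1 + (b : ℝ)) ^ i) * G := by ring
    _ ≤ ((b : ℝ) ^ m + 2 * (Real.exp 1 * (b : ℝ) ^ m)) * G := by gcongr
    _ = (1 + 2 * Real.exp 1) * (b : ℝ) ^ (m + 1 - 1) * G := by rw [Nat.add_sub_cancel]; ring

/-- `Greedy` is `O(b^(k-1))`-competitive for the `d`-uniform
bounded-delay goodput problem with `k` packets per frame and maximum burst size `b`:
letting `O` be the set of frames delivered by an optimal schedule and `F_G` the set of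
frames completed by `Greedy`, `|O \ F_G| ≤ |F_G| · 2 · Σ_{i<k} (1+b)^i`, and hence
(for `b ≥ k`) `|O| ≤ C · b^(k-1) · |F_G|` for some absolute constant `C`. -/
theorem greedy_competitive_ratio :
    ∃ C : ℝ, 0 < C ∧
      ∀ (n k d b : ℕ) (A : ArrivalSeq n k d) (E : AlgExec A)
        (S : ℕ → Option (Fin n × Fin k)),
        1 ≤ k → k ≤ d → A.BurstBound b → E.GreedyValid → A.IsOptimal S →
        (Set.ncard {f : Fin n | A.Successful S f ∧ ¬ E.Completed f}
            ≤ Set.ncard {f : Fin n | E.Completed f} *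
              (2 * ∑ i ∈ Finset.range k, (1 + b) ^ i)) ∧
        (k ≤ b →
          (Set.ncard {f : Fin n | A.Successful S f} : ℝ)
            ≤ C * (b : ℝ) ^ (k - 1) *
              (Set.ncard {f : Fin n | E.Completed f} : ℝ)) :=
  ⟨1 + 2 * Real.exp 1, by positivity, fun _ _ _ _ _ _ _ hk hkd hb hE hS =>
    (greedy_competitive_ratio_general (hkd.trans (Nat.le_succ _)) hb hE hS.1).imp_right (· hk)⟩
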